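/- Let G be a graph of even order p and size e with χ(G) = χ_la(G). Suppose there exists a local antimagic labeling f of G with c(f) = χ(G). Let m ≠ n be integers with m, n ≥ 2, m ≡ n (mod 2) and (m,n) ≠ (2,2). If for every vertex u of G, f⁺(u) is not equal to (p−m)e + (p−m−n)(p(m+n)+1)/2 + np(m+n) + n(mn+1)/2 and not equal to (p−n)e + (p−m−n)(p(m+n)+1)/2 + mp(m+n) + m(mn+1)/2, then χ_la(G ∨ K_{m,n}) = χ_la(G) + 2. -/

import Mathlib

open Finset SimpleGraph
open scoped Classical

/-- The induced vertex label (weight) of `x`: the sum of `f` over all edges incident to `x`. -/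
noncomputable def vertexWeight {V : Type*} [Fintype V] (G : SimpleGraph V)
    (f : Sym2 V → ℕ) (x : V) : ℕ :=
  ∑ e ∈ G.edgeFinset.filter (fun e => x ∈ e), f e

/-- `f` is a local antimagic labeling of `G`: it restricts to a bijection from the edge set of
`G` onto `{1, …, q}` (where `q` is the number of edges), and adjacent vertices get distinct
induced vertex labels. -/
def IsLocalAntimagic {V : Type*} [Fintype V] (G : SimpleGraph V) (f : Sym2 V → ℕ) : Prop :=
  Set.BijOn f G.edgeSet (Set.Icc 1 G.edgeSet.ncard) ∧
  ∀ ⦃x y : V⦄, G.Adj x y → vertexWeight G f x ≠ vertexWeight G f y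

/-- The number of distinct induced vertex labels, `c(f)`. -/
noncomputable def colorCount {V : Type*} [Fintype V] (G : SimpleGraph V)
    (f : Sym2 V → ℕ) : ℕ :=
  (Finset.univ.image (vertexWeight G f)).card

/-- The local antimagic chromatic number `χ_la(G)`. -/
noncomputable def chiLA {V : Type*} [Fintype V] (G : SimpleGraph V) : ℕ :=
  sInf { n | ∃ f : Sym2 V → ℕ, IsLocalAntimagic G f ∧ colorCount G f = n }

/-- The join `G ∨ H` of two vertex-disjoint graphs. -/
def joinG {α β : Type*} (G : SimpleGraph α) (H : SimpleGraph β) : SimpleGraph (α ⊕ β) :=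
  SimpleGraph.fromRel (fun x y =>
    (∃ a b, x = Sum.inl a ∧ y = Sum.inl b ∧ G.Adj a b) ∨
    (∃ a b, x = Sum.inr a ∧ y = Sum.inr b ∧ H.Adj a b) ∨
    (∃ a b, x = Sum.inl a ∧ y = Sum.inr b))

/-!
Give the edges of `G` their labels under `f`, label the edges of the join between `V` and
`Fin m ⊕ Fin n` by the entries of a `p × (m + n)` magic rectangle shifted by `e`, and the edges of
`K_{m,n}` by those of an `m × n` magic rectangle shifted by `e + p (m + n)`. Constant row sums shift
all weights of `G` by the same amount, so no new colour arises there, and constant sums in the other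
directions leave one colour for each side of `K_{m,n}`. These two differ because `m ≠ n`, and the
avoided values are the ones at which they would collide with a weight of `G`. The lower bound holds
because a local antimagic labeling induces a proper colouring and `χ(G ∨ K_{m,n}) ≥ χ(G) + 2`.

Centre a magic rectangle at zero, so that all its sums vanish. With an even number of rows four
columns can be appended to it, which reduces the even case to the `2 × 6` rectangle. For odd sides
the entries are pairs of digits, balanced separately in each row and column; only the `3 × 7` case
escapes this and is given explicitly.
-/

section MagicRectangle

variable {α β γ : Type*} [Fintype α] [Fintype β] [Fintype γ]

/-- A magic rectangle with rows `α` and columns `β`: its entries are `1, …, |α||β|`, all row sums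
agree and all column sums agree. The common values are forced, and stated doubled because they may
be half-integers. -/
structure IsMagicRectangle (M : α → β → ℕ) : Prop where
  bijOn : Set.BijOn (Function.uncurry M) Set.univ (Set.Icc 1 (Fintype.card α * Fintype.card β))
  two_mul_row_sum : ∀ a, 2 * ∑ b, M a b =
    Fintype.card β * (Fintype.card α * Fintype.card β + 1)
  two_mul_col_sum : ∀ b, 2 * ∑ a, M a b =
    Fintype.card α * (Fintype.card α * Fintype.card β + 1)

/-- A magic rectangle in centred form: with `N = |α||β|`, each entry `v ∈ {1, …, N}` is replaced by
`2 * v - (N + 1)`, so that the entries are `N - 1, N - 3, …, -(N - 1)` and all sums vanish. -/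
structure IsCenteredMagicRectangle (w : α → β → ℤ) : Prop where
  injective : Function.Injective2 w
  abs_lt_card : ∀ a b, |w a b| < (Fintype.card α : ℤ) * Fintype.card β
  odd : ∀ a b, Odd (w a b + (Fintype.card α : ℤ) * Fintype.card β)
  row_sum : ∀ a, ∑ b, w a b = 0
  col_sum : ∀ b, ∑ a, w a b = 0

/-- There is a magic rectangle with `m` rows and `n` columns, encoded in centred form. -/
def HasMagicRectangle (m n : ℕ) : Prop :=
  ∃ w : Fin m → Fin n → ℤ, IsCenteredMagicRectangle w

namespace IsCenteredMagicRectangle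

variable {w : α → β → ℤ}

theorem transpose (hw : IsCenteredMagicRectangle w) :
    IsCenteredMagicRectangle fun b a => w a b where
  injective _ _ _ _ h := (hw.injective h).symm
  abs_lt_card b a := by simpa only [mul_comm] using hw.abs_lt_card a b
  odd b a := by simpa only [mul_comm] using hw.odd a b
  row_sum := hw.col_sum
  col_sum := hw.row_sum

theorem reindex {α' β' : Type*} [Fintype α'] [Fintype β'] (hw : IsCenteredMagicRectangle w)
    (eα : α' ≃ α) (eβ : β' ≃ β) :
    IsCenteredMagicRectangle fun a b => w (eα a) (eβ b) where
  injective _ _ _ _ h :=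
    (hw.injective h).imp (fun ha => eα.injective ha) fun hb => eβ.injective hb
  abs_lt_card a b := by
    simpa only [Fintype.card_congr eα, Fintype.card_congr eβ] using hw.abs_lt_card (eα a) (eβ b)
  odd a b := by
    simpa only [Fintype.card_congr eα, Fintype.card_congr eβ] using hw.odd (eα a) (eβ b)
  row_sum a := (eβ.sum_comp (w (eα a))).trans (hw.row_sum _)
  col_sum b := (eα.sum_comp fun a => w a (eβ b)).trans (hw.col_sum _)

theorem hasMagicRectangle (hw : IsCenteredMagicRectangle w) {m n : ℕ}
    (hm : Fintype.card α = m) (hn : Fintype.card β = n) : HasMagicRectangle m n :=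
  ⟨_, hw.reindex (Fintype.equivFinOfCardEq hm).symm (Fintype.equivFinOfCardEq hn).symm⟩

theorem exists_isMagicRectangle (hw : IsCenteredMagicRectangle w) :
    ∃ M : α → β → ℕ, IsMagicRectangle M := by
  have exists_two_mul_eq (a : α) (b : β) :
      ∃ v : ℕ, 2 * (v : ℤ) = w a b + Fintype.card α * Fintype.card β + 1 := by
    obtain ⟨v, hv⟩ := hw.odd a b
    have := abs_lt.1 (hw.abs_lt_card a b)
    exact ⟨(v + 1).toNat, by omega⟩
  choose M hM using exists_two_mul_eq
  have mapsTo : Set.MapsTo (Function.uncurry M) Set.univ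
      (Set.Icc 1 (Fintype.card α * Fintype.card β)) := by
    rintro ⟨a, b⟩ -
    have := abs_lt.1 (hw.abs_lt_card a b)
    have := hM a b
    simp only [Function.uncurry_apply_pair, Set.mem_Icc]
    zify
    omega
  have injective : Function.Injective (Function.uncurry M) := by
    rintro ⟨a, b⟩ ⟨a', b'⟩ h
    have h' : M a b = M a' b' := h
    have := hM a b
    have := hM a' b'
    have heq : w a b = w a' b' := by omega
    exact Prod.ext_iff.2 (hw.injective heq)
  refine ⟨M, ⟨mapsTo, injective.injOn, ?_⟩, fun a => ?_, fun b => ?_⟩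
  · simpa using surjOn_of_injOn_of_card_le (s := univ)
      (t := Icc 1 (Fintype.card α * Fintype.card β)) (Function.uncurry M)
      (by simpa using mapsTo) injective.injOn (by simp)
  · zify
    simp only [mul_sum, hM, sum_add_distrib, hw.row_sum, sum_const, card_univ, nsmul_eq_mul]
    ring
  · zify
    simp only [mul_sum, hM, sum_add_distrib, hw.col_sum, sum_const, card_univ, nsmul_eq_mul]
    ring

theorem append {v : α → γ → ℤ} (hw : IsCenteredMagicRectangle w) (injective : Function.Injective2 v)
    (lt_abs : ∀ a c, (Fintype.card α : ℤ) * Fintype.card β < |v a c|)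
    (abs_lt : ∀ a c, |v a c| < (Fintype.card α : ℤ) * (Fintype.card β + Fintype.card γ))
    (odd : ∀ a c, Odd (v a c + (Fintype.card α : ℤ) * Fintype.card β))
    (even : Even ((Fintype.card α : ℤ) * Fintype.card γ))
    (row_sum : ∀ a, ∑ c, v a c = 0) (col_sum : ∀ c, ∑ a, v a c = 0) :
    IsCenteredMagicRectangle fun a => Sum.elim (w a) (v a) where
  injective := by
    rintro a a' (b | c) (b' | c') h <;> simp only [Sum.elim_inl, Sum.elim_inr] at h
    · simpa using hw.injective h
    · exact absurd (h ▸ hw.abs_lt_card a b) (lt_abs a' c').not_gt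
    · exact absurd (h ▸ hw.abs_lt_card a' b') (lt_abs a c).not_gt
    · simpa using injective h
  abs_lt_card := by
    rintro a (b | c) <;> simp only [Sum.elim_inl, Sum.elim_inr, Fintype.card_sum, Nat.cast_add]
    · exact (hw.abs_lt_card a b).trans_le (by gcongr; simp)
    · exact abs_lt a c
  odd := by
    rintro a (b | c) <;>
      simp only [Sum.elim_inl, Sum.elim_inr, Fintype.card_sum, Nat.cast_add, mul_add, ← add_assoc]
    · exact (hw.odd a b).add_even even
    · exact (odd a c).add_even even
  row_sum a := by simp [hw.row_sum, row_sum]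
  col_sum := by rintro (b | c) <;> simp [hw.col_sum, col_sum]

end IsCenteredMagicRectangle

theorem HasMagicRectangle.symm {m n : ℕ} (h : HasMagicRectangle m n) : HasMagicRectangle n m :=
  let ⟨_, hw⟩ := h
  ⟨_, hw.transpose⟩

theorem HasMagicRectangle.exists_isMagicRectangle {m n : ℕ} (h : HasMagicRectangle m n)
    (hm : Fintype.card α = m) (hn : Fintype.card β = n) :
    ∃ M : α → β → ℕ, IsMagicRectangle M :=
  let ⟨_, hw⟩ := h
  (hw.reindex (Fintype.equivFinOfCardEq hm) (Fintype.equivFinOfCardEq hn)).exists_isMagicRectangle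

end MagicRectangle

section EvenMagicRectangle

/-- Four new columns for a centred magic rectangle with `2 * c` rows and `N` cells. Rows come in
opposite pairs, indexed by a sign, which makes the column sums vanish; the row sums vanish because
`x - (x + 2) - (x + 4) + (x + 6) = 0`. -/
def fourColumns (N : ℤ) {c : ℕ} (a : Fin c × ℤˣ) (j : Fin 4) : ℤ :=
  a.2 * (![1, -1, -1, 1] j * (N + 1 + 8 * a.1 + 2 * j))

theorem abs_fourColumns {N : ℤ} (hN : 0 ≤ N) {c : ℕ} (a : Fin c × ℤˣ) (j : Fin 4) :
    |fourColumns N a j| = N + 1 + 8 * a.1 + 2 * j := by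
  have abs_sign : |(![1, -1, -1, 1] j : ℤ)| = 1 := by fin_cases j <;> rfl
  rw [fourColumns, abs_mul, abs_mul, abs_sign, Int.isUnit_iff_abs_eq.1 a.2.isUnit, one_mul, one_mul,
    abs_of_nonneg (by positivity)]

theorem fourColumns_injective2 {N : ℤ} (hN : 0 ≤ N) (c : ℕ) :
    Function.Injective2 (fourColumns N (c := c)) := by
  rintro ⟨a, s⟩ ⟨a', s'⟩ j j' h
  have habs := congrArg abs h
  simp only [abs_fourColumns hN] at habs
  have hj := j.isLt
  have hj' := j'.isLt
  obtain rfl : a = a' := Fin.ext (by omega)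
  obtain rfl : j = j' := Fin.ext (by omega)
  have hne : (![1, -1, -1, 1] j * (N + 1 + 8 * a + 2 * j) : ℤ) ≠ 0 :=
    mul_ne_zero (by fin_cases j <;> decide) (by positivity)
  obtain rfl : s = s' := Units.ext (mul_right_cancel₀ hne h)
  exact ⟨rfl, rfl⟩

theorem IsCenteredMagicRectangle.append_fourColumns {β : Type*} [Fintype β] {c : ℕ}
    {w : Fin c × ℤˣ → β → ℤ} (hw : IsCenteredMagicRectangle w) :
    IsCenteredMagicRectangle fun a =>
      Sum.elim (w a) (fourColumns (Fintype.card (Fin c × ℤˣ) * Fintype.card β) a) := by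
  have hN : (0 : ℤ) ≤ Fintype.card (Fin c × ℤˣ) * Fintype.card β := by positivity
  refine hw.append (fourColumns_injective2 hN c) (fun a j => ?_) (fun a j => ?_) (fun a j => ?_)
    (by simp [parity_simps]) (fun a => ?_) fun j => ?_
  · rw [abs_fourColumns hN]
    lia
  · rw [abs_fourColumns hN]
    have ha := a.1.isLt
    simp only [Fintype.card_prod, Fintype.card_fin, Fintype.card_units_int, Nat.cast_mul, mul_add]
    push_cast
    omega
  · refine (odd_abs.1 ?_).add_even (by simp [parity_simps])
    rw [abs_fourColumns hN]
    exact ⟨c * Fintype.card β + 4 * a.1 + j, by simp; ring⟩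
  · simp only [fourColumns, ← mul_sum, Fin.sum_univ_four]
    simp
    ring
  · simp [fourColumns, Fintype.sum_prod_type]

theorem HasMagicRectangle.add_four {m n : ℕ} (hm : Even m) (h : HasMagicRectangle m n) :
    HasMagicRectangle m (n + 4) := by
  obtain ⟨c, rfl⟩ := hm
  obtain ⟨w, hw⟩ := h
  have e : Fin c × ℤˣ ≃ Fin (c + c) := Fintype.equivFinOfCardEq (by simp; ring)
  exact (hw.reindex e (Equiv.refl _)).append_fourColumns.hasMagicRectangle
    (by simp; ring) (by simp)

theorem HasMagicRectangle.of_modEq_four {m n n' : ℕ} (hm : Even m) (h : HasMagicRectangle m n)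
    (hmod : n ≡ n' [MOD 4]) (hle : n ≤ n') : HasMagicRectangle m n' := by
  obtain ⟨k, hk⟩ := (Nat.modEq_iff_dvd' hle).1 hmod
  obtain rfl : n' = n + 4 * k := by lia
  clear hk hmod hle
  induction k with
  | zero => exact h
  | succ k ih => exact ih.add_four hm

theorem hasMagicRectangle_zero (m : ℕ) : HasMagicRectangle m 0 :=
  ⟨fun _ => Fin.elim0, fun _ _ b => b.elim0, fun _ b => b.elim0, fun _ b => b.elim0,
    by simp, fun b => b.elim0⟩

theorem hasMagicRectangle_two_six : HasMagicRectangle 2 6 :=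
  ⟨![![1, 3, 5, 9, -7, -11], ![-1, -3, -5, -9, 7, 11]], by unfold Function.Injective2; decide,
    by simp only [Fintype.card_fin]; decide, by simp only [Fintype.card_fin]; decide,
    by decide, by decide⟩

theorem hasMagicRectangle_of_mod_four_eq_two {m n : ℕ} (hm : m % 4 = 2) (hn : n % 4 = 2)
    (h6 : 6 ≤ n) : HasMagicRectangle m n :=
  have two : HasMagicRectangle 2 n := hasMagicRectangle_two_six.of_modEq_four even_two hn.symm h6
  (two.symm.of_modEq_four (Nat.even_iff.2 (by lia)) hm.symm (by lia)).symm

theorem hasMagicRectangle_of_even {m n : ℕ} (hm : Even m) (hn : Even n)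
    (hmn : ¬(m = 2 ∧ n = 2)) : HasMagicRectangle m n := by
  have of_four_dvd {a b : ℕ} (ha : Even a) (hb : 4 ∣ b) : HasMagicRectangle a b :=
    (hasMagicRectangle_zero a).of_modEq_four ha ((Nat.modEq_zero_iff_dvd.2 hb).symm) b.zero_le
  rw [Nat.even_iff] at hm hn
  by_cases hn4 : 4 ∣ n
  · exact of_four_dvd (Nat.even_iff.2 hm) hn4
  by_cases hm4 : 4 ∣ m
  · exact (of_four_dvd (Nat.even_iff.2 hn) hm4).symm
  by_cases h6 : 6 ≤ n
  · exact hasMagicRectangle_of_mod_four_eq_two (by lia) (by lia) h6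
  · exact (hasMagicRectangle_of_mod_four_eq_two (m := n) (by lia) (by lia) (by lia)).symm

end EvenMagicRectangle

section OddMagicRectangle

theorem sum_comp_of_mapsTo_of_injOn {ι M : Type*} [AddCommMonoid M] {s : Finset ι} {σ : ι → ι}
    (hσ : Set.MapsTo σ s s) (hinj : Set.InjOn σ s) (F : ι → M) :
    ∑ x ∈ s, F (σ x) = ∑ x ∈ s, F x :=
  sum_nbij σ hσ hinj (surjOn_of_injOn_of_card_le σ hσ hinj le_rfl) fun _ _ => rfl

theorem sum_eq_zero_of_neg_mem {ι M : Type*} [InvolutiveNeg ι] [AddCommGroup M]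
    [IsAddTorsionFree M] {s : Finset ι} {F : ι → M} (hs : ∀ x ∈ s, -x ∈ s)
    (hF : ∀ x ∈ s, F (-x) = -F x) : ∑ x ∈ s, F x = 0 := by
  have sum_neg : ∑ x ∈ s, F (-x) = ∑ x ∈ s, F x :=
    sum_comp_of_mapsTo_of_injOn hs neg_injective.injOn F
  rw [sum_congr rfl hF, sum_neg_distrib] at sum_neg
  exact neg_eq_self.1 sum_neg

theorem sum_Icc_neg_eq_zero_of_odd {F : ℤ → ℤ} (hF : ∀ x, F (-x) = -F x) (k : ℤ) :
    ∑ x ∈ Icc (-k) k, F x = 0 :=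
  sum_eq_zero_of_neg_mem (fun x hx => by rw [mem_Icc] at hx ⊢; omega) fun x _ => hF x

theorem IsCenteredMagicRectangle.of_digits {α β : Type*} [Fintype α] [Fintype β]
    {A B : α → β → ℤ} {h k : ℤ} (hα : (Fintype.card α : ℤ) = 2 * h + 1)
    (hβ : (Fintype.card β : ℤ) = 2 * k + 1)
    (hA : ∀ a b, A a b ∈ Icc (-h) h) (hB : ∀ a b, B a b ∈ Icc (-k) k)
    (injective : ∀ a a' b b', A a b = A a' b' → B a b = B a' b' → a = a' ∧ b = b')
    (row_sum_left : ∀ a, ∑ b, A a b = 0) (row_sum_right : ∀ a, ∑ b, B a b = 0)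
    (col_sum_left : ∀ b, ∑ a, A a b = 0) (col_sum_right : ∀ b, ∑ a, B a b = 0) :
    IsCenteredMagicRectangle fun a b => 2 * ((2 * k + 1) * A a b + B a b) where
  injective a a' b b' heq := by
    have hb := mem_Icc.1 (hB a b)
    have hb' := mem_Icc.1 (hB a' b')
    have right_eq : B a' b' - B a b = 0 :=
      Int.eq_zero_of_abs_lt_dvd (m := 2 * k + 1) ⟨A a b - A a' b', by linarith⟩
        (abs_lt.2 ⟨by omega, by omega⟩)
    have left_eq : A a b = A a' b' :=
      mul_left_cancel₀ (show 2 * k + 1 ≠ 0 by omega) (by linarith)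
    exact injective _ _ _ _ left_eq (by linarith)
  abs_lt_card a b := by
    obtain ⟨hA₁, hA₂⟩ := mem_Icc.1 (hA a b)
    obtain ⟨hB₁, hB₂⟩ := mem_Icc.1 (hB a b)
    rw [hα, hβ, abs_lt]
    constructor <;> nlinarith
  odd a b := by
    rw [hα, hβ]
    exact ⟨(2 * k + 1) * A a b + B a b + 2 * h * k + h + k, by ring⟩
  row_sum a := by simp [← mul_sum, sum_add_distrib, row_sum_left, row_sum_right]
  col_sum b := by simp [← mul_sum, sum_add_distrib, col_sum_left, col_sum_right]

/-- The cyclic shift by `k` on the interval `[-k, k]`. As `t` runs over this interval, so do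
`halfShift k t` and `-(t + halfShift k t)`: three permutations whose pointwise sum vanishes. -/
def halfShift (k t : ℤ) : ℤ :=
  if t ≤ 0 then t + k else t - k - 1

theorem halfShift_zero (k : ℤ) : halfShift k 0 = k := by
  simp [halfShift]

theorem halfShift_neg_self {k : ℤ} (hk : 0 ≤ k) : halfShift k (-k) = 0 := by
  simp [halfShift, hk]

/-- The leading digit, in the digits `-h, …, h`, of the entry in row `r` and column `t`. Each column
permutes the digits. The columns in `X` carry `r` and the others `-r`, except for two columns which
absorb the resulting imbalance of the row sums. -/
def leadDigit (h k : ℤ) (X : Finset ℤ) (r t : ℤ) : ℤ :=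
  if t = 0 then -(r + halfShift h r) else if t = -k then halfShift h r else if t ∈ X then r else -r

/-- The trailing digit, in the digits `-k, …, k`, of an entry in column `t` with leading digit `i`.
For each `i` it permutes the digits. -/
def trailDigit (h k : ℤ) (τ : Equiv.Perm ℤ) (i t : ℤ) : ℤ :=
  if i = 0 then t else if i = h then halfShift k t else if i = -h then -(t + halfShift k t)
  else if 0 < i then τ t else -τ t

/-- The conditions on the set `X` and the permutation `τ` under which `leadDigit` and `trailDigit`
are the digits of a magic rectangle with `2 * k + 1` columns. -/
structure IsBalancingPair (k : ℤ) (X : Finset ℤ) (τ : Equiv.Perm ℤ) : Prop where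
  pos : 0 < k
  subset : X ⊆ ((Icc (-k) k).erase 0).erase (-k)
  card_eq : (#X : ℤ) = k
  mapsTo : Set.MapsTo τ (Icc (-k) k) (Icc (-k) k)
  apply_zero : τ 0 = 0
  apply_neg_self : τ (-k) = -k
  sum_apply : ∑ t ∈ X, τ t = 0
  sum_halfShift : ∑ t ∈ X, (2 * halfShift k t + t) = -k

section Digits

variable {h k : ℤ} {X : Finset ℤ} {τ : Equiv.Perm ℤ}

theorem mapsTo_leadDigit (hh : 0 < h) (k : ℤ) (X : Finset ℤ) (t : ℤ) :
    Set.MapsTo (fun r => leadDigit h k X r t) (Icc (-h) h) (Icc (-h) h) := by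
  intro r hr
  simp only [coe_Icc, Set.mem_Icc, leadDigit, halfShift] at hr ⊢
  split_ifs <;> omega

theorem injOn_leadDigit (h k : ℤ) (X : Finset ℤ) (t : ℤ) :
    Set.InjOn (fun r => leadDigit h k X r t) (Icc (-h) h) := by
  intro r hr r' hr' heq
  simp only [coe_Icc, Set.mem_Icc, leadDigit, halfShift] at hr hr' heq
  split_ifs at heq <;> omega

theorem mapsTo_trailDigit (h : ℤ) (hτ : Set.MapsTo τ (Icc (-k) k) (Icc (-k) k)) (i : ℤ) :
    Set.MapsTo (trailDigit h k τ i) (Icc (-k) k) (Icc (-k) k) := by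
  intro t ht
  have hτt := hτ ht
  simp only [coe_Icc, Set.mem_Icc, trailDigit, halfShift] at ht hτt ⊢
  split_ifs <;> omega

theorem injOn_trailDigit (h k : ℤ) (τ : Equiv.Perm ℤ) (i : ℤ) :
    Set.InjOn (trailDigit h k τ i) (Icc (-k) k) := by
  intro t ht t' ht' heq
  have hτ := τ.injective (a₁ := t) (a₂ := t')
  simp only [coe_Icc, Set.mem_Icc, trailDigit, halfShift] at ht ht' heq
  split_ifs at heq <;> omega

theorem sum_trailDigit (h : ℤ) (hτ : Set.MapsTo τ (Icc (-k) k) (Icc (-k) k)) (i : ℤ) :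
    ∑ t ∈ Icc (-k) k, trailDigit h k τ i t = 0 :=
  (sum_comp_of_mapsTo_of_injOn (mapsTo_trailDigit h hτ i) (injOn_trailDigit h k τ i) _).trans
    (sum_Icc_neg_eq_zero_of_odd (F := fun t => t) (fun _ => rfl) k)

theorem sum_trailDigit_left (hh : 0 < h) (k : ℤ) (τ : Equiv.Perm ℤ) (t : ℤ) :
    ∑ i ∈ Icc (-h) h, trailDigit h k τ i t = 0 := by
  have odd_part := sum_Icc_neg_eq_zero_of_odd (k := h)
    (F := fun i => trailDigit h k τ i t - (if i = 0 then t else 0) + if i = h then t else 0)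
    (fun i => by
      simp only [trailDigit]
      split_ifs <;> omega)
  simpa [sum_add_distrib, sum_sub_distrib, hh.le, (neg_nonpos.2 hh.le).trans hh.le] using odd_part

theorem sum_leadDigit_left (hh : 0 < h) (k : ℤ) (X : Finset ℤ) (t : ℤ) (F : ℤ → ℤ) :
    ∑ r ∈ Icc (-h) h, F (leadDigit h k X r t) = ∑ i ∈ Icc (-h) h, F i :=
  sum_comp_of_mapsTo_of_injOn (mapsTo_leadDigit hh k X t) (injOn_leadDigit h k X t) F

namespace IsBalancingPair

theorem sum_comp_leadDigit (hX : IsBalancingPair k X τ) (h r : ℤ) (F : ℤ → ℤ → ℤ) :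
    ∑ t ∈ Icc (-k) k, F (leadDigit h k X r t) t = ∑ t ∈ Icc (-k) k, F (-r) t +
      ∑ t ∈ X, (F r t - F (-r) t) + (F (-(r + halfShift h r)) 0 - F (-r) 0) +
      (F (halfShift h r) (-k) - F (-r) (-k)) := by
  have h0k : -k < 0 := neg_lt_zero.2 hX.pos
  have hX0 : 0 ∉ X := fun h0 => by simpa using hX.subset h0
  have hXk : -k ∉ X := fun hk => by simpa using hX.subset hk
  have pointwise (t : ℤ) : F (leadDigit h k X r t) t = F (-r) t +
      (if t ∈ X then F r t - F (-r) t else 0) +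
      (if t = 0 then F (-(r + halfShift h r)) t - F (-r) t else 0) +
      (if t = -k then F (halfShift h r) t - F (-r) t else 0) := by
    rcases eq_or_ne t 0 with rfl | ht0
    · simp [leadDigit, hX0, h0k.ne']
    rcases eq_or_ne t (-k) with rfl | htk
    · simp [leadDigit, hXk, ht0]
    by_cases ht : t ∈ X <;> simp [leadDigit, ht, ht0, htk]
  have inter_eq : Icc (-k) k ∩ X = X :=
    inter_eq_right.2 fun t ht => mem_of_mem_erase (mem_of_mem_erase (hX.subset ht))
  simp only [pointwise, sum_add_distrib, sum_ite_mem, sum_ite_eq', inter_eq, mem_Icc]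
  rw [if_pos (by omega), if_pos (by omega)]

theorem sum_leadDigit (hX : IsBalancingPair k X τ) (h r : ℤ) :
    ∑ t ∈ Icc (-k) k, leadDigit h k X r t = 0 := by
  have hk : ((Icc (-k) k).card : ℤ) = 2 * k + 1 := by
    have := hX.pos
    rw [Int.card_Icc]
    omega
  rw [hX.sum_comp_leadDigit h r fun i _ => i]
  simp only [sum_const, nsmul_eq_mul, hk, hX.card_eq]
  ring

theorem trailDigit_zero (hX : IsBalancingPair k X τ) (h i : ℤ) :
    trailDigit h k τ i 0 = if i = 0 then 0 else if i = h then k else if i = -h then -k else 0 := by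
  simp [trailDigit, hX.apply_zero, halfShift_zero]

theorem trailDigit_neg_self (hX : IsBalancingPair k X τ) (hh : 0 < h) (i : ℤ) :
    trailDigit h k τ i (-k) = if i = h then 0 else if i < 0 then k else -k := by
  simp only [trailDigit, hX.apply_neg_self, halfShift_neg_self hX.pos.le]
  split_ifs <;> omega

theorem sum_trailDigit_sub (hX : IsBalancingPair k X τ) (hh : 0 < h) (r : ℤ) :
    ∑ t ∈ X, (trailDigit h k τ r t - trailDigit h k τ (-r) t) =
      if r = h then -k else if r = -h then k else 0 := by
  have pointwise (t : ℤ) : trailDigit h k τ r t - trailDigit h k τ (-r) t =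
      if r = h then 2 * halfShift k t + t else if r = -h then -(2 * halfShift k t + t)
      else if 0 < r then 2 * τ t else if r < 0 then -(2 * τ t) else 0 := by
    simp only [trailDigit]
    split_ifs <;> omega
  simp only [pointwise]
  split_ifs
  · exact hX.sum_halfShift
  · rw [sum_neg_distrib, hX.sum_halfShift, neg_neg]
  · rw [← mul_sum, hX.sum_apply, mul_zero]
  · rw [sum_neg_distrib, ← mul_sum, hX.sum_apply, mul_zero, neg_zero]
  · exact sum_const_zero

theorem sum_trailDigit_leadDigit (hX : IsBalancingPair k X τ) (hh : 0 < h) {r : ℤ}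
    (hr : r ∈ Icc (-h) h) :
    ∑ t ∈ Icc (-k) k, trailDigit h k τ (leadDigit h k X r t) t = 0 := by
  rw [hX.sum_comp_leadDigit, sum_trailDigit h hX.mapsTo, hX.sum_trailDigit_sub hh]
  simp only [hX.trailDigit_zero, hX.trailDigit_neg_self hh, halfShift]
  rw [mem_Icc] at hr
  split_ifs <;> omega

theorem isCenteredMagicRectangle (hX : IsBalancingPair k X τ) (hh : 0 < h) :
    IsCenteredMagicRectangle fun (r : Icc (-h) h) (t : Icc (-k) k) =>
      2 * ((2 * k + 1) * leadDigit h k X r t + trailDigit h k τ (leadDigit h k X r t) t) := by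
  have hk := hX.pos
  refine .of_digits (h := h) (by simp; omega) (by simp; omega)
    (fun r t => mapsTo_leadDigit hh k X t r.2) (fun _ t => mapsTo_trailDigit h hX.mapsTo _ t.2)
    ?_ (fun r => ?_) (fun r => ?_) (fun t => ?_) fun t => ?_
  · intro r r' t t' lead_eq trail_eq
    rw [lead_eq] at trail_eq
    obtain rfl : t = t' := Subtype.ext (injOn_trailDigit h k τ _ t.2 t'.2 trail_eq)
    exact ⟨Subtype.ext (injOn_leadDigit h k X t r.2 r'.2 lead_eq), rfl⟩
  · exact (sum_coe_sort (Icc (-k) k) (leadDigit h k X r)).trans (hX.sum_leadDigit h r)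
  · exact (sum_coe_sort (Icc (-k) k) fun t => trailDigit h k τ (leadDigit h k X r t) t).trans
      (hX.sum_trailDigit_leadDigit hh r.2)
  · rw [sum_coe_sort (Icc (-h) h) fun r => leadDigit h k X r t,
      sum_leadDigit_left hh k X t fun i => i]
    exact sum_Icc_neg_eq_zero_of_odd (F := fun i => i) (fun _ => rfl) h
  · rw [sum_coe_sort (Icc (-h) h) fun r => trailDigit h k τ (leadDigit h k X r t) t,
      sum_leadDigit_left hh k X t fun i => trailDigit h k τ i t, sum_trailDigit_left hh]

end IsBalancingPair

end Digits

theorem sum_halfShift_of_neg_mem (k : ℤ) {s : Finset ℤ} (hs : ∀ t ∈ s, -t ∈ s) (h0 : 0 ∉ s) :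
    ∑ t ∈ s, (2 * halfShift k t + t) = -#s := by
  have odd_part : ∑ t ∈ s, (2 * halfShift k t + t + 1) = 0 := by
    refine sum_eq_zero_of_neg_mem hs fun t ht => ?_
    have ht0 : t ≠ 0 := ne_of_mem_of_not_mem ht h0
    simp only [halfShift]
    split_ifs <;> omega
  rw [sum_add_distrib, sum_const, nsmul_one] at odd_part
  exact eq_neg_of_add_eq_zero_left odd_part

theorem card_Icc_neg_erase_zero {j : ℤ} (hj : 0 ≤ j) : (#((Icc (-j) j).erase 0) : ℤ) = 2 * j := by
  rw [card_erase_of_mem (by simp [hj]), Int.card_Icc]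
  omega

theorem neg_mem_Icc_neg_erase_zero {j t : ℤ} (ht : t ∈ (Icc (-j) j).erase 0) :
    -t ∈ (Icc (-j) j).erase 0 := by
  simp only [mem_erase, mem_Icc] at ht ⊢
  omega

theorem isBalancingPair_two_mul {j : ℤ} (hj : 0 < j) :
    IsBalancingPair (2 * j) ((Icc (-j) j).erase 0) 1 where
  pos := by omega
  subset t ht := by
    simp only [mem_erase, mem_Icc] at ht ⊢
    omega
  card_eq := card_Icc_neg_erase_zero hj.le
  mapsTo := Set.mapsTo_id _
  apply_zero := rfl
  apply_neg_self := rfl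
  sum_apply := sum_eq_zero_of_neg_mem (fun _ => neg_mem_Icc_neg_erase_zero) fun _ _ => rfl
  sum_halfShift := by
    rw [sum_halfShift_of_neg_mem _ (fun _ => neg_mem_Icc_neg_erase_zero) (notMem_erase _ _),
      card_Icc_neg_erase_zero hj.le]

/-- The set `X` of the balancing pair for odd `k = 2 * j + 1`. -/
noncomputable def balancingSet (j : ℤ) : Finset ℤ :=
  {j, j + 2, 2 * j + 1} ∪ (Icc (-(j - 1)) (j - 1)).erase 0

/-- The permutation `τ` of the balancing pair for odd `k = 2 * j + 1`. -/
def balancingPerm (j : ℤ) : Equiv.Perm ℤ :=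
  Equiv.swap (2 * j + 1) (-j) * Equiv.swap 1 (-(j + 1))

theorem sum_balancingSet {j : ℤ} (hj : 2 ≤ j) (F : ℤ → ℤ) :
    ∑ t ∈ balancingSet j, F t =
      F j + F (j + 2) + F (2 * j + 1) + ∑ t ∈ (Icc (-(j - 1)) (j - 1)).erase 0, F t := by
  have disjoint : Disjoint {j, j + 2, 2 * j + 1} ((Icc (-(j - 1)) (j - 1)).erase 0) := by
    simp only [disjoint_insert_left, disjoint_singleton_left, mem_erase, mem_Icc]
    omega
  rw [balancingSet, sum_union disjoint, sum_insert (by simp; omega), sum_insert (by simp; omega),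
    sum_singleton]
  ring

theorem balancingPerm_apply {j : ℤ} (hj : 0 < j) (t : ℤ) :
    balancingPerm j t = if t = 1 then -(j + 1) else if t = -(j + 1) then 1
      else if t = 2 * j + 1 then -j else if t = -j then 2 * j + 1 else t := by
  simp only [balancingPerm, Equiv.Perm.mul_apply, Equiv.swap_apply_def]
  split_ifs <;> omega

theorem sum_balancingPerm {j : ℤ} (hj : 2 ≤ j) :
    ∑ t ∈ (Icc (-(j - 1)) (j - 1)).erase 0, balancingPerm j t = -(j + 2) := by
  have apply_eq {t : ℤ} (ht : t ∈ (Icc (-(j - 1)) (j - 1)).erase 0) :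
      balancingPerm j t = t + if t = 1 then -(j + 2) else 0 := by
    rw [mem_erase, mem_Icc] at ht
    rw [balancingPerm_apply (by omega)]
    split_ifs <;> omega
  have one_mem : 1 ∈ (Icc (-(j - 1)) (j - 1)).erase 0 := by
    rw [mem_erase, mem_Icc]
    omega
  rw [sum_congr rfl fun t => apply_eq, sum_add_distrib, sum_ite_eq', if_pos one_mem,
    sum_eq_zero_of_neg_mem (F := fun t => t) (fun _ => neg_mem_Icc_neg_erase_zero) fun _ _ => rfl,
    zero_add]

theorem isBalancingPair_two_mul_add_one {j : ℤ} (hj : 2 ≤ j) :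
    IsBalancingPair (2 * j + 1) (balancingSet j) (balancingPerm j) where
  pos := by omega
  subset t ht := by
    simp only [balancingSet, mem_union, mem_insert, mem_singleton, mem_erase, mem_Icc] at ht ⊢
    omega
  card_eq := by
    rw [card_eq_sum_ones, Nat.cast_sum, sum_balancingSet hj, ← Nat.cast_sum,
      ← card_eq_sum_ones, card_Icc_neg_erase_zero (by omega)]
    push_cast
    ring
  mapsTo t ht := by
    rw [coe_Icc, Set.mem_Icc] at ht ⊢
    rw [balancingPerm_apply (by omega)]
    split_ifs <;> omega
  apply_zero := by
    rw [balancingPerm_apply (by omega)]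
    split_ifs <;> omega
  apply_neg_self := by
    rw [balancingPerm_apply (by omega)]
    split_ifs <;> omega
  sum_apply := by
    rw [sum_balancingSet hj, sum_balancingPerm hj]
    simp only [balancingPerm_apply (show 0 < j by omega)]
    split_ifs <;> omega
  sum_halfShift := by
    rw [sum_balancingSet hj, sum_halfShift_of_neg_mem _
      (fun _ => neg_mem_Icc_neg_erase_zero) (notMem_erase _ _), card_Icc_neg_erase_zero (by omega)]
    simp only [halfShift]
    split_ifs <;> omega

theorem hasMagicRectangle_three_seven : HasMagicRectangle 3 7 :=
  ⟨![![20, -20, -6, 16, -14, 12, -8], ![-4, 6, -12, 2, 10, -10, 8],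
      ![-16, 14, 18, -18, 4, -2, 0]],
    by unfold Function.Injective2; decide, by simp only [Fintype.card_fin]; decide,
    by simp only [Fintype.card_fin]; decide, by decide, by decide⟩

theorem hasMagicRectangle_two_mul_add_one_of_ne_three {a b : ℕ} (ha : 0 < a) (hb : 2 ≤ b)
    (hb3 : b ≠ 3) : HasMagicRectangle (2 * a + 1) (2 * b + 1) := by
  obtain ⟨X, τ, hX⟩ : ∃ X τ, IsBalancingPair b X τ := by
    obtain ⟨j, rfl | rfl⟩ := b.even_or_odd'
    · exact ⟨_, _, mod_cast isBalancingPair_two_mul (j := j) (by omega)⟩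
    · exact ⟨_, _, mod_cast isBalancingPair_two_mul_add_one (j := j) (by omega)⟩
  exact (hX.isCenteredMagicRectangle (h := a) (by omega)).hasMagicRectangle
    (by simp; omega) (by simp; omega)

theorem hasMagicRectangle_two_mul_add_one {a b : ℕ} (ha : 0 < a) (hb : 0 < b) (hab : a ≠ b) :
    HasMagicRectangle (2 * a + 1) (2 * b + 1) := by
  by_cases hb' : 2 ≤ b ∧ b ≠ 3
  · exact hasMagicRectangle_two_mul_add_one_of_ne_three ha hb'.1 hb'.2
  by_cases ha' : 2 ≤ a ∧ a ≠ 3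
  · exact (hasMagicRectangle_two_mul_add_one_of_ne_three hb ha'.1 ha'.2).symm
  obtain ⟨rfl, rfl⟩ | ⟨rfl, rfl⟩ : (a = 1 ∧ b = 3) ∨ (a = 3 ∧ b = 1) := by omega
  · exact hasMagicRectangle_three_seven
  · exact hasMagicRectangle_three_seven.symm

end OddMagicRectangle

theorem hasMagicRectangle_of_mod_two_eq {m n : ℕ} (hmn : m ≠ n) (hm : 2 ≤ m) (hn : 2 ≤ n)
    (hpar : m % 2 = n % 2) : HasMagicRectangle m n := by
  obtain ⟨a, rfl | rfl⟩ := m.even_or_odd'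
  · exact hasMagicRectangle_of_even (even_two_mul a) (Nat.even_iff.2 (by omega)) (by omega)
  · obtain ⟨b, rfl⟩ : ∃ b, n = 2 * b + 1 := ⟨n / 2, by omega⟩
    exact hasMagicRectangle_two_mul_add_one (by omega) (by omega) (by omega)

theorem chromaticNumber_le_encard_range {V γ : Type*} {G : SimpleGraph V} (C : G.Coloring γ) :
    G.chromaticNumber ≤ (Set.range C).encard := by
  let D : G.Coloring (Set.range C) :=
    .mk (fun v => ⟨C v, v, rfl⟩) fun h heq => C.valid h (congrArg Subtype.val heq)
  cases finite_or_infinite (Set.range C)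
  · have := Fintype.ofFinite (Set.range C)
    exact D.colorable.chromaticNumber_le.trans_eq ENat.card_eq_coe_fintype_card.symm
  · exact le_top.trans_eq ENat.card_eq_top_of_infinite.symm

section VertexWeight

variable {V : Type*} [Fintype V]

theorem vertexWeight_eq_sum (G : SimpleGraph V) (f : Sym2 V → ℕ) (x : V) :
    vertexWeight G f x = ∑ y, if G.Adj x y then f s(x, y) else 0 := by
  rw [vertexWeight, ← sum_filter]
  refine (sum_bij (fun y _ => s(x, y)) (fun y hy => ?_) (fun y _ z _ => Sym2.congr_right.1)
    (fun e he => ?_) fun _ _ => rfl).symm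
  · simpa using hy
  · simp only [mem_filter, mem_edgeFinset] at he
    obtain ⟨he, y, rfl⟩ := he
    exact ⟨y, by simpa using he, rfl⟩

@[simp]
theorem vertexWeight_bot (f : Sym2 V → ℕ) (x : V) : vertexWeight ⊥ f x = 0 := by
  simp [vertexWeight_eq_sum]

theorem chromaticNumber_le_colorCount {G : SimpleGraph V} {f : Sym2 V → ℕ}
    (hf : IsLocalAntimagic G f) : G.chromaticNumber ≤ colorCount G f := by
  have h := chromaticNumber_le_encard_range (.mk (vertexWeight G f) (hf.2 ·))
  rwa [← Set.image_univ, ← coe_univ, ← coe_image, Set.encard_coe_eq_coe_finsetCard] at h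

theorem chiLA_eq_of_colorCount_le {G : SimpleGraph V} {f : Sym2 V → ℕ} {d : ℕ}
    (hd : d ≤ G.chromaticNumber) (hf : IsLocalAntimagic G f) (hfd : colorCount G f ≤ d) :
    chiLA G = d := by
  have le_colorCount {g : Sym2 V → ℕ} (hg : IsLocalAntimagic G g) : d ≤ colorCount G g :=
    Nat.cast_le.1 (hd.trans (chromaticNumber_le_colorCount hg))
  have mem : d ∈ {n | ∃ g, IsLocalAntimagic G g ∧ colorCount G g = n} :=
    ⟨f, hf, hfd.antisymm (le_colorCount hf)⟩
  refine (Nat.sInf_le mem).antisymm (le_csInf ⟨d, mem⟩ ?_)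
  rintro _ ⟨g, hg, rfl⟩
  exact le_colorCount hg

end VertexWeight

section Join

variable {α β : Type*} {G : SimpleGraph α} {H : SimpleGraph β}

@[simp]
theorem joinG_adj_inl_inr (a : α) (b : β) : (joinG G H).Adj (.inl a) (.inr b) := by
  simp [joinG]

@[simp]
theorem joinG_adj_inr_inl (a : α) (b : β) : (joinG G H).Adj (.inr b) (.inl a) :=
  (joinG_adj_inl_inr a b).symm

@[simp]
theorem joinG_adj_inl_inl {a a' : α} : (joinG G H).Adj (.inl a) (.inl a') ↔ G.Adj a a' := by
  simpa [joinG, G.adj_comm a'] using fun h : G.Adj a a' => h.ne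

@[simp]
theorem joinG_adj_inr_inr {b b' : β} : (joinG G H).Adj (.inr b) (.inr b') ↔ H.Adj b b' := by
  simpa [joinG, H.adj_comm b'] using fun h : H.Adj b b' => h.ne

theorem joinG_bot_bot :
    joinG (⊥ : SimpleGraph α) (⊥ : SimpleGraph β) = completeBipartiteGraph α β := by
  ext (_ | _) (_ | _) <;> simp

theorem edgeSet_joinG : (joinG G H).edgeSet =
    Sym2.map .inl '' G.edgeSet ∪ Set.range (fun x : α × β => s(.inl x.1, .inr x.2)) ∪
      Sym2.map .inr '' H.edgeSet := by
  refine Set.Subset.antisymm (fun e he => ?_) ?_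
  · induction e with | _ x y =>
    rcases x with a | b <;> rcases y with a' | b'
    · exact .inl (.inl ⟨s(a, a'), joinG_adj_inl_inl.1 he, rfl⟩)
    · exact .inl (.inr ⟨(a, b'), rfl⟩)
    · exact .inl (.inr ⟨(a', b), Sym2.eq_swap⟩)
    · exact .inr ⟨s(b, b'), joinG_adj_inr_inr.1 he, rfl⟩
  · rintro _ ((⟨⟨a, a'⟩, he, rfl⟩ | ⟨⟨a, b⟩, rfl⟩) | ⟨⟨b, b'⟩, he, rfl⟩)
    · exact joinG_adj_inl_inl.2 he
    · exact joinG_adj_inl_inr a b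
    · exact joinG_adj_inr_inr.2 he

theorem add_chromaticNumber_le_chromaticNumber_joinG :
    G.chromaticNumber + H.chromaticNumber ≤ (joinG G H).chromaticNumber := by
  refine le_iInf₂ fun k ⟨C⟩ => ?_
  let CG : G.Coloring (Fin k) := .mk (fun a => C (.inl a)) fun h => C.valid (joinG_adj_inl_inl.2 h)
  let CH : H.Coloring (Fin k) := .mk (fun b => C (.inr b)) fun h => C.valid (joinG_adj_inr_inr.2 h)
  have disjoint : Disjoint (Set.range CG) (Set.range CH) := by
    rw [Set.disjoint_range_iff]
    exact fun a b => C.valid (joinG_adj_inl_inr a b)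
  calc G.chromaticNumber + H.chromaticNumber
      ≤ (Set.range CG).encard + (Set.range CH).encard :=
        add_le_add (chromaticNumber_le_encard_range CG) (chromaticNumber_le_encard_range CH)
    _ = (Set.range CG ∪ Set.range CH).encard := (Set.encard_union_eq disjoint).symm
    _ ≤ (Set.univ : Set (Fin k)).encard := Set.encard_le_encard (Set.subset_univ _)
    _ = k := by simp

theorem chromaticNumber_add_two_le_chromaticNumber_joinG {A B : Type*} [Nonempty A] [Nonempty B] :
    G.chromaticNumber + 2 ≤ (joinG G (completeBipartiteGraph A B)).chromaticNumber := by
  simpa [CompleteBipartiteGraph.chromaticNumber] using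
    add_chromaticNumber_le_chromaticNumber_joinG (G := G) (H := completeBipartiteGraph A B)

end Join

theorem bijOn_union_of_disjoint {α β : Type*} {f : α → β} {s₁ s₂ : Set α} {t₁ t₂ : Set β}
    (h₁ : Set.BijOn f s₁ t₁) (h₂ : Set.BijOn f s₂ t₂) (ht : Disjoint t₁ t₂) :
    Set.BijOn f (s₁ ∪ s₂) (t₁ ∪ t₂) := by
  have ne {x y : α} (hx : x ∈ s₁) (hy : y ∈ s₂) : f x ≠ f y :=
    ht.ne_of_mem (h₁.mapsTo hx) (h₂.mapsTo hy)
  have hs : Disjoint s₁ s₂ := Set.disjoint_left.2 fun x hx hx' => ne hx hx' rfl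
  exact h₁.union h₂ ((Set.injOn_union hs).2 ⟨h₁.injOn, h₂.injOn, fun _ hx _ => ne hx⟩)

theorem bijOn_Icc_one_ncard {α : Type*} {f : α → ℕ} {s : Set α} {k : ℕ}
    (h : Set.BijOn f s (Set.Icc 1 k)) : Set.BijOn f s (Set.Icc 1 s.ncard) := by
  rwa [h.ncard_eq, ← coe_Icc 1 k, Set.ncard_coe_finset, Nat.card_Icc, Nat.add_sub_cancel]

theorem bijOn_const_add_Icc_one {α : Type*} {f : α → ℕ} {s : Set α} {k : ℕ}
    (h : Set.BijOn f s (Set.Icc 1 k)) (c : ℕ) :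
    Set.BijOn (fun x => c + f x) s (Set.Icc (c + 1) (c + k)) := by
  rw [← Set.image_const_add_Icc]
  exact (add_right_injective c).injOn.bijOn_image.comp h

section JoinLabeling

variable {α β : Type*} [Fintype α] [Fintype β] {G : SimpleGraph α} {H : SimpleGraph β}
  {f : Sym2 α → ℕ} {M : α → β → ℕ} {g : Sym2 β → ℕ}

/-- The labeling of `joinG G H` that follows `f` on the edges of `G`, then `M` on the edges between
the two sides, and then `g` on the edges of `H`; each block is shifted past the previous ones. -/
noncomputable def joinLabeling (G : SimpleGraph α) (f : Sym2 α → ℕ) (M : α → β → ℕ)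
    (g : Sym2 β → ℕ) : Sym2 (α ⊕ β) → ℕ :=
  Sym2.lift ⟨fun
    | .inl a, .inl a' => f s(a, a')
    | .inl a, .inr b => G.edgeSet.ncard + M a b
    | .inr b, .inl a => G.edgeSet.ncard + M a b
    | .inr b, .inr b' => G.edgeSet.ncard + Fintype.card α * Fintype.card β + g s(b, b'),
    by rintro (_ | _) (_ | _) <;> simp only [Sym2.eq_swap]⟩

theorem bijOn_joinLabeling (hf : Set.BijOn f G.edgeSet (Set.Icc 1 G.edgeSet.ncard))
    (hM : Set.BijOn (Function.uncurry M) Set.univ (Set.Icc 1 (Fintype.card α * Fintype.card β)))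
    (hg : Set.BijOn g H.edgeSet (Set.Icc 1 H.edgeSet.ncard)) :
    Set.BijOn (joinLabeling G f M g) (joinG G H).edgeSet
      (Set.Icc 1 (joinG G H).edgeSet.ncard) := by
  set q := G.edgeSet.ncard
  set r := Fintype.card α * Fintype.card β
  have left : Set.BijOn (joinLabeling G f M g) (Sym2.map .inl '' G.edgeSet) (Set.Icc 1 q) := by
    rw [← Set.bijOn_comp_iff (Sym2.map.injective Sum.inl_injective).injOn]
    exact hf.congr fun e _ => by induction e; rfl
  have cross : Set.BijOn (joinLabeling G f M g)
      (Set.range fun x : α × β => s(.inl x.1, .inr x.2)) (Set.Icc (q + 1) (q + r)) := by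
    rw [← Set.image_univ, ← Set.bijOn_comp_iff fun x _ y _ h => by simpa [Prod.ext_iff] using h]
    exact bijOn_const_add_Icc_one hM q
  have right : Set.BijOn (joinLabeling G f M g) (Sym2.map .inr '' H.edgeSet)
      (Set.Icc (q + r + 1) (q + r + H.edgeSet.ncard)) := by
    rw [← Set.bijOn_comp_iff (Sym2.map.injective Sum.inr_injective).injOn]
    exact (bijOn_const_add_Icc_one hg (q + r)).congr fun e _ => by induction e; rfl
  have h := bijOn_union_of_disjoint (bijOn_union_of_disjoint left cross ?_) right ?_
  · rw [← edgeSet_joinG] at h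
    refine bijOn_Icc_one_ncard (k := q + r + H.edgeSet.ncard) ?_
    convert h using 1
    ext
    simp only [Set.mem_union, Set.mem_Icc]
    omega
  all_goals
    rw [Set.disjoint_left]
    simp only [Set.mem_union, Set.mem_Icc]
    omega

/-- The vertex weights induced on the join by `joinLabeling`. -/
noncomputable def joinWeight (G : SimpleGraph α) (H : SimpleGraph β) (f : Sym2 α → ℕ)
    (M : α → β → ℕ) (g : Sym2 β → ℕ) : α ⊕ β → ℕ :=
  vertexWeight (joinG G H) (joinLabeling G f M g)

theorem joinWeight_inl (a : α) :
    joinWeight G H f M g (.inl a) =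
      vertexWeight G f a + (Fintype.card β * G.edgeSet.ncard + ∑ b, M a b) := by
  simp [joinWeight, vertexWeight_eq_sum, joinLabeling, sum_add_distrib]

theorem joinWeight_inr (b : β) :
    joinWeight G H f M g (.inr b) =
      vertexWeight H g b
        + H.degree b * (G.edgeSet.ncard + Fintype.card α * Fintype.card β)
        + (Fintype.card α * G.edgeSet.ncard + ∑ a, M a b) := by
  have hdeg : H.degree b = ∑ b', if H.Adj b b' then 1 else 0 := H.degree_eq_sum_if_adj b
  have add_ite (b' : β) (c : ℕ) : (if H.Adj b b' then c + g s(b, b') else 0) =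
      (if H.Adj b b' then g s(b, b') else 0) + (if H.Adj b b' then 1 else 0) * c := by
    split_ifs <;> ring
  simp only [joinWeight, vertexWeight_eq_sum, Fintype.sum_sum_type, joinLabeling, Sym2.lift_mk,
    joinG_adj_inr_inl, joinG_adj_inr_inr, if_true, add_ite, sum_add_distrib, ← sum_mul, sum_const,
    card_univ, smul_eq_mul, hdeg]
  ring

theorem two_mul_joinWeight_inl (hM : IsMagicRectangle M) (a : α) :
    2 * joinWeight G H f M g (.inl a) =
      2 * vertexWeight G f a + Fintype.card β *
        (2 * G.edgeSet.ncard + (Fintype.card α * Fintype.card β + 1)) := by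
  rw [joinWeight_inl]
  linear_combination hM.two_mul_row_sum a

theorem two_mul_joinWeight_inr (hM : IsMagicRectangle M) (b : β) :
    2 * joinWeight G H f M g (.inr b) =
      2 * vertexWeight H g b
        + 2 * H.degree b * (G.edgeSet.ncard + Fintype.card α * Fintype.card β)
        + Fintype.card α * (2 * G.edgeSet.ncard + (Fintype.card α * Fintype.card β + 1)) := by
  rw [joinWeight_inr]
  linear_combination hM.two_mul_col_sum b

theorem exists_joinWeight_inl_eq_add (hM : IsMagicRectangle M) :
    ∃ c, ∀ a, joinWeight G H f M g (.inl a) = vertexWeight G f a + c := by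
  refine ⟨Fintype.card β *
    (2 * G.edgeSet.ncard + (Fintype.card α * Fintype.card β + 1)) / 2, fun a => ?_⟩
  have h := two_mul_joinWeight_inl (G := G) (H := H) (f := f) (g := g) hM a
  omega

theorem isLocalAntimagic_joinLabeling (hf : IsLocalAntimagic G f) (hM : IsMagicRectangle M)
    (hg : Set.BijOn g H.edgeSet (Set.Icc 1 H.edgeSet.ncard))
    (hcross : ∀ a b, joinWeight G H f M g (.inl a) ≠ joinWeight G H f M g (.inr b))
    (hH : ∀ b b', H.Adj b b' → joinWeight G H f M g (.inr b) ≠ joinWeight G H f M g (.inr b')) :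
    IsLocalAntimagic (joinG G H) (joinLabeling G f M g) := by
  refine ⟨bijOn_joinLabeling hf.1 hM.bijOn hg, ?_⟩
  rintro (a | b) (a' | b') hadj
  · obtain ⟨c, hc⟩ := exists_joinWeight_inl_eq_add (G := G) (H := H) (f := f) (g := g) hM
    change joinWeight G H f M g _ ≠ joinWeight G H f M g _
    rw [hc, hc]
    exact (add_left_injective c).ne (hf.2 (joinG_adj_inl_inl.1 hadj))
  · exact hcross a b'
  · exact (hcross a' b).symm
  · exact hH b b' (joinG_adj_inr_inr.1 hadj)

theorem card_image_sum_le {γ : Type*} [DecidableEq γ] (φ : α ⊕ β → γ) :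
    #(univ.image φ) ≤ #(univ.image fun a => φ (.inl a)) + #(univ.image fun b => φ (.inr b)) := by
  refine (card_le_card ?_).trans (card_union_le _ _)
  rw [image_subset_iff]
  rintro (a | b) - <;> simp

theorem card_image_sum_le_two {γ : Type*} [DecidableEq γ] {φ : α ⊕ β → γ}
    (hα : ∀ a a', φ (.inl a) = φ (.inl a')) (hβ : ∀ b b', φ (.inr b) = φ (.inr b')) :
    #(univ.image φ) ≤ 2 :=
  (card_image_sum_le φ).trans <| Nat.add_le_add (b := 1) (d := 1)
    (by simpa [card_le_one] using hα) (by simpa [card_le_one] using hβ)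

theorem colorCount_joinLabeling_le (hM : IsMagicRectangle M) :
    colorCount (joinG G H) (joinLabeling G f M g) ≤ colorCount G f +
      #(univ.image fun b => joinWeight G H f M g (.inr b)) := by
  obtain ⟨c, hc⟩ := exists_joinWeight_inl_eq_add (G := G) (H := H) (f := f) (g := g) hM
  refine (card_image_sum_le (joinWeight G H f M g)).trans (Nat.add_le_add_right ?_ _)
  calc #(univ.image fun a => joinWeight G H f M g (.inl a))
      = #((univ.image (vertexWeight G f)).image (· + c)) := by
        simp only [image_image, Function.comp_def, hc]
    _ ≤ colorCount G f := card_image_le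

end JoinLabeling

section BipartiteLabeling

variable {α A B : Type*} [Fintype α] [Fintype A] [Fintype B] {G : SimpleGraph α} {f : Sym2 α → ℕ}
  {M : α → A ⊕ B → ℕ} {L : A → B → ℕ}

/-- The labeling of `completeBipartiteGraph A B` by the entries of `L`, seen as a join labeling of
two edgeless graphs (see `joinG_bot_bot`). -/
noncomputable def bipartiteLabeling (L : A → B → ℕ) : Sym2 (A ⊕ B) → ℕ :=
  joinLabeling ⊥ 0 L 0

theorem bijOn_bipartiteLabeling (hL : IsMagicRectangle L) :
    Set.BijOn (bipartiteLabeling L) (completeBipartiteGraph A B).edgeSet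
      (Set.Icc 1 (completeBipartiteGraph A B).edgeSet.ncard) := by
  simpa only [joinG_bot_bot, bipartiteLabeling] using
    bijOn_joinLabeling (G := (⊥ : SimpleGraph A)) (H := (⊥ : SimpleGraph B)) (f := 0) (g := 0)
      (by simp) hL.bijOn (by simp)

theorem vertexWeight_bipartiteLabeling (L : A → B → ℕ) :
    vertexWeight (completeBipartiteGraph A B) (bipartiteLabeling L) = joinWeight ⊥ ⊥ 0 L 0 := by
  rw [← joinG_bot_bot, bipartiteLabeling]
  rfl

theorem two_mul_vertexWeight_bipartiteLabeling_inl (hL : IsMagicRectangle L) (i : A) :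
    2 * vertexWeight (completeBipartiteGraph A B) (bipartiteLabeling L) (.inl i) =
      Fintype.card B * (Fintype.card A * Fintype.card B + 1) := by
  rw [vertexWeight_bipartiteLabeling, two_mul_joinWeight_inl hL]
  simp

theorem two_mul_vertexWeight_bipartiteLabeling_inr (hL : IsMagicRectangle L) (j : B) :
    2 * vertexWeight (completeBipartiteGraph A B) (bipartiteLabeling L) (.inr j) =
      Fintype.card A * (Fintype.card A * Fintype.card B + 1) := by
  rw [vertexWeight_bipartiteLabeling, two_mul_joinWeight_inr hL]
  simp

theorem degree_completeBipartiteGraph_inl (i : A) :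
    (completeBipartiteGraph A B).degree (.inl i) = Fintype.card B := by
  rw [← Nat.cast_id (degree _ _), degree_eq_sum_if_adj, Fintype.sum_sum_type]
  simp

theorem degree_completeBipartiteGraph_inr (j : B) :
    (completeBipartiteGraph A B).degree (.inr j) = Fintype.card A := by
  rw [← Nat.cast_id (degree _ _), degree_eq_sum_if_adj, Fintype.sum_sum_type]
  simp

theorem two_mul_joinWeight_bipartiteLabeling_inl (hM : IsMagicRectangle M)
    (hL : IsMagicRectangle L) (i : A) :
    2 * joinWeight G (completeBipartiteGraph A B) f M (bipartiteLabeling L) (.inr (.inl i)) =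
      Fintype.card B * (2 * (G.edgeSet.ncard + Fintype.card α * Fintype.card (A ⊕ B))
          + (Fintype.card A * Fintype.card B + 1))
        + Fintype.card α *
          (2 * G.edgeSet.ncard + (Fintype.card α * Fintype.card (A ⊕ B) + 1)) := by
  rw [two_mul_joinWeight_inr hM, two_mul_vertexWeight_bipartiteLabeling_inl hL,
    degree_completeBipartiteGraph_inl]
  ring

theorem two_mul_joinWeight_bipartiteLabeling_inr (hM : IsMagicRectangle M)
    (hL : IsMagicRectangle L) (j : B) :
    2 * joinWeight G (completeBipartiteGraph A B) f M (bipartiteLabeling L) (.inr (.inr j)) =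
      Fintype.card A * (2 * (G.edgeSet.ncard + Fintype.card α * Fintype.card (A ⊕ B))
          + (Fintype.card A * Fintype.card B + 1))
        + Fintype.card α *
          (2 * G.edgeSet.ncard + (Fintype.card α * Fintype.card (A ⊕ B) + 1)) := by
  rw [two_mul_joinWeight_inr hM, two_mul_vertexWeight_bipartiteLabeling_inr hL,
    degree_completeBipartiteGraph_inr]
  ring

theorem two_mul_vertexWeight_eq_of_joinWeight_eq_inl (hM : IsMagicRectangle M)
    (hL : IsMagicRectangle L) {a : α} {i : A}
    (h : joinWeight G (completeBipartiteGraph A B) f M (bipartiteLabeling L) (.inl a) =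
      joinWeight G (completeBipartiteGraph A B) f M (bipartiteLabeling L) (.inr (.inl i))) :
    2 * (vertexWeight G f a : ℤ) =
      2 * ((Fintype.card α : ℤ) - Fintype.card A) * G.edgeSet.ncard
        + ((Fintype.card α : ℤ) - Fintype.card A - Fintype.card B)
          * (Fintype.card α * (Fintype.card A + Fintype.card B) + 1)
        + 2 * Fintype.card B * Fintype.card α * (Fintype.card A + Fintype.card B)
        + Fintype.card B * (Fintype.card A * Fintype.card B + 1) := by
  have h₂ := congrArg (2 * ·) h
  simp only [two_mul_joinWeight_inl hM, Fintype.card_sum,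
    two_mul_joinWeight_bipartiteLabeling_inl hM hL] at h₂
  zify at h₂
  linear_combination h₂

theorem two_mul_vertexWeight_eq_of_joinWeight_eq_inr (hM : IsMagicRectangle M)
    (hL : IsMagicRectangle L) {a : α} {j : B}
    (h : joinWeight G (completeBipartiteGraph A B) f M (bipartiteLabeling L) (.inl a) =
      joinWeight G (completeBipartiteGraph A B) f M (bipartiteLabeling L) (.inr (.inr j))) :
    2 * (vertexWeight G f a : ℤ) =
      2 * ((Fintype.card α : ℤ) - Fintype.card B) * G.edgeSet.ncard
        + ((Fintype.card α : ℤ) - Fintype.card A - Fintype.card B)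
          * (Fintype.card α * (Fintype.card A + Fintype.card B) + 1)
        + 2 * Fintype.card A * Fintype.card α * (Fintype.card A + Fintype.card B)
        + Fintype.card A * (Fintype.card A * Fintype.card B + 1) := by
  have h₂ := congrArg (2 * ·) h
  simp only [two_mul_joinWeight_inl hM, Fintype.card_sum,
    two_mul_joinWeight_bipartiteLabeling_inr hM hL] at h₂
  zify at h₂
  linear_combination h₂

theorem joinWeight_inr_inl_ne_inr_inr (hM : IsMagicRectangle M) (hL : IsMagicRectangle L)
    (hAB : Fintype.card A ≠ Fintype.card B) (i : A) (j : B) :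
    joinWeight G (completeBipartiteGraph A B) f M (bipartiteLabeling L) (.inr (.inl i)) ≠
      joinWeight G (completeBipartiteGraph A B) f M (bipartiteLabeling L) (.inr (.inr j)) := by
  intro h
  have h₂ := congrArg (2 * ·) h
  simp only [two_mul_joinWeight_bipartiteLabeling_inl hM hL,
    two_mul_joinWeight_bipartiteLabeling_inr hM hL] at h₂
  exact hAB (Nat.eq_of_mul_eq_mul_right (by positivity) (Nat.add_right_cancel h₂)).symm

theorem isLocalAntimagic_joinLabeling_bipartiteLabeling (hf : IsLocalAntimagic G f)
    (hM : IsMagicRectangle M) (hL : IsMagicRectangle L) (hAB : Fintype.card A ≠ Fintype.card B)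
    (hcross : ∀ a z, joinWeight G (completeBipartiteGraph A B) f M (bipartiteLabeling L) (.inl a) ≠
      joinWeight G (completeBipartiteGraph A B) f M (bipartiteLabeling L) (.inr z)) :
    IsLocalAntimagic (joinG G (completeBipartiteGraph A B))
      (joinLabeling G f M (bipartiteLabeling L)) := by
  refine isLocalAntimagic_joinLabeling hf hM (bijOn_bipartiteLabeling hL) hcross ?_
  rintro (i | j) (i' | j') hadj
  · simp at hadj
  · exact joinWeight_inr_inl_ne_inr_inr hM hL hAB i j'
  · exact (joinWeight_inr_inl_ne_inr_inr hM hL hAB i' j).symm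
  · simp at hadj

theorem colorCount_joinLabeling_bipartiteLabeling_le (hM : IsMagicRectangle M)
    (hL : IsMagicRectangle L) :
    colorCount (joinG G (completeBipartiteGraph A B))
      (joinLabeling G f M (bipartiteLabeling L)) ≤ colorCount G f + 2 := by
  have card_le_two : #(univ.image fun z =>
      joinWeight G (completeBipartiteGraph A B) f M (bipartiteLabeling L) (.inr z)) ≤ 2 := by
    refine card_image_sum_le_two (fun i i' => ?_) fun j j' => ?_ <;>
      apply Nat.eq_of_mul_eq_mul_left two_pos
    · simp only [two_mul_joinWeight_bipartiteLabeling_inl hM hL]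
    · simp only [two_mul_joinWeight_bipartiteLabeling_inr hM hL]
  exact (colorCount_joinLabeling_le hM).trans (Nat.add_le_add_left card_le_two _)

end BipartiteLabeling

/-- Theorem: Let `G` be a graph of even order `p` and size `e` with `χ(G) = χ_la(G) = t`,
witnessed by a local antimagic labeling `f` with `c(f) = t = χ(G)`. Let `m ≠ n`, `m, n ≥ 2`,
`m ≡ n (mod 2)`, `(m,n) ≠ (2,2)`. If for each vertex `u`, `f⁺(u)` avoids the two stated values,
then `χ_la(G ∨ K_{m,n}) = χ_la(G) + 2`.  (The avoided-value conditions are stated multiplied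
by 2 over `ℤ`, which is equivalent since the parity hypotheses make the relevant products even.) -/
theorem chiLA_join_completeBipartite {V : Type*} [Fintype V] (G : SimpleGraph V)
    (p e m n t : ℕ)
    (hp : Fintype.card V = p) (hpeven : Even p)
    (he : G.edgeSet.ncard = e)
    (hchi : G.chromaticNumber = (t : ℕ∞)) (hla : chiLA G = t)
    (f : Sym2 V → ℕ) (hf : IsLocalAntimagic G f) (hcf : colorCount G f = t)
    (hmn : m ≠ n) (hm : 2 ≤ m) (hn : 2 ≤ n) (hpar : m % 2 = n % 2)
    (h22 : ¬(m = 2 ∧ n = 2))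
    (hne : ∀ u : V,
      2 * (vertexWeight G f u : ℤ) ≠
        2 * ((p : ℤ) - m) * e + ((p : ℤ) - m - n) * ((p : ℤ) * (m + n) + 1)
          + 2 * n * p * (m + n) + n * ((m : ℤ) * n + 1) ∧
      2 * (vertexWeight G f u : ℤ) ≠
        2 * ((p : ℤ) - n) * e + ((p : ℤ) - m - n) * ((p : ℤ) * (m + n) + 1)
          + 2 * m * p * (m + n) + m * ((m : ℤ) * n + 1)) :
    chiLA (joinG G (completeBipartiteGraph (Fin m) (Fin n))) = chiLA G + 2 := by
  subst hp he
  obtain ⟨M, hM⟩ := (hasMagicRectangle_of_even hpeven (n := m + n) (Nat.even_iff.2 (by omega))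
    (by omega)).exists_isMagicRectangle (α := V) (β := Fin m ⊕ Fin n) rfl (by simp)
  obtain ⟨L, hL⟩ := (hasMagicRectangle_of_mod_two_eq hmn hm hn hpar).exists_isMagicRectangle
    (α := Fin m) (β := Fin n) (by simp) (by simp)
  have : Nonempty (Fin m) := Fin.pos_iff_nonempty.1 (by omega)
  have : Nonempty (Fin n) := Fin.pos_iff_nonempty.1 (by omega)
  have antimagic := isLocalAntimagic_joinLabeling_bipartiteLabeling hf hM hL (by simpa using hmn) ?_
  · rw [hla]
    refine chiLA_eq_of_colorCount_le ?_ antimagic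
      (hcf ▸ colorCount_joinLabeling_bipartiteLabeling_le hM hL)
    rw [Nat.cast_add, ← hchi]
    exact chromaticNumber_add_two_le_chromaticNumber_joinG
  rintro u (i | j) h
  · exact (hne u).1 (by simpa using two_mul_vertexWeight_eq_of_joinWeight_eq_inl hM hL h)
  · exact (hne u).2 (by simpa using two_mul_vertexWeight_eq_of_joinWeight_eq_inr hM hL h)
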